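/- For every integer n ≥ 1, ρ_n = (24/π²)·( n!·(−1)^{n+1}·b_{n+1}/2^{n+1} + 2·(−log 2)^{n+2}/((n+2)·(n+1)) ). -/

import Mathlib

open MeasureTheory

/-- The limiting density of the logarithm of smallest denominators. -/
noncomputable def etaLog (s : ℝ) : ℝ :=
  if s ≤ 0 then 6 / Real.pi ^ 2 * Real.exp (2 * s)
  else if s ≤ Real.log 2 then 6 / Real.pi ^ 2 * (-Real.exp (2 * s) + 2 + 4 * s)
  else 6 / Real.pi ^ 2 * (-Real.exp (2 * s) + 2
    + 2 * Real.exp (2 * s) * Real.sqrt (1 / 4 - Real.exp (-2 * s))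
    - 4 * Real.log (1 / 2 + Real.sqrt (1 / 4 - Real.exp (-2 * s))))

/-- Euler beta function B(z, 1/2). -/
noncomputable def betaHalf (z : ℝ) : ℝ :=
  Real.Gamma z * Real.Gamma (1 / 2) / Real.Gamma (z + 1 / 2)

/-- B(z,1/2) minus its pole 1/z, extended by its limit 2 log 2 at z = 0. -/
noncomputable def f (z : ℝ) : ℝ :=
  if z = 0 then 2 * Real.log 2 else betaHalf z - 1 / z

/-- The Laurent coefficients of B(z,1/2) at z = 0 (for nonnegative indices). -/
noncomputable def b (n : ℕ) : ℝ := (1 / (n.factorial : ℝ)) * iteratedDeriv n f 0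

/-!
Put `L = log 2`, `r(x) = √(1 - e^{-2x})` and `K = 1/r - 1`. The substitution `t = e^{-2x}` in the
integral for `B(z + 1, 1/2)`, the functional equation of `Γ` and an integration by parts give
`B(z, 1/2) - 1/z = 2 ∫₀^∞ e^{-2zx} K(x) dx` for `z > -1`, so the coefficient `b m` is a multiple of
the moment `∫₀^∞ x^m K(x) dx`.

The density shifted by `L`, `g(x) = η_log(x + L)`, satisfies `g' = 2 g - (48/π²) w`, where `w` is
the continuous integrable function with `w' = 1_{(-L, 0)} - 1_{(0, ∞)} K`. Integrating `(xⁿ g)'`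
turns `ρ_n` into `(48/π²) ∫ xⁿ w`, and integrating `(xⁿ⁺¹ w)'` expresses this moment of `w` through
`∫₀^∞ xⁿ⁺¹ K` and `∫_{-L}^0 xⁿ⁺¹`, which are the two terms of the formula.
-/

open Set Filter Topology Real ProbabilityTheory

section IntegrationByParts

theorem integral_eq_zero_of_hasDerivAt_off_countable_of_integrable {E : Type*}
    [NormedAddCommGroup E] [NormedSpace ℝ E] [CompleteSpace E] {F F' : ℝ → E} {s : Set ℝ}
    (hs : s.Countable) (hcont : Continuous F) (hderiv : ∀ x ∉ s, HasDerivAt F (F' x) x)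
    (hF' : Integrable F') (hF : Integrable F) : ∫ x, F' x = 0 := by
  have hlim : Tendsto (fun R => F R - F (-R)) atTop (𝓝 (∫ x, F' x)) := by
    refine (intervalIntegral_tendsto_integral hF' tendsto_neg_atTop_atBot tendsto_id).congr
      fun R => ?_
    exact integral_eq_of_hasDerivAt_off_countable F F' hs hcont.continuousOn
      (fun x hx => hderiv x hx.2) hF'.intervalIntegrable
  have hintegrable : Integrable (fun R => F R - F (-R)) := hF.sub hF.comp_neg
  refine (hintegrable.integrableAtFilter atTop).eq_zero_of_tendsto (fun t ht => ?_) hlim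
  obtain ⟨a, ha⟩ := mem_atTop_sets.1 ht
  exact measure_mono_top ha volume_Ici

theorem integral_mul_deriv_eq_neg_of_integrable_off_countable {A : Type*} [NormedRing A]
    [NormedAlgebra ℝ A] [CompleteSpace A] {u v u' v' : ℝ → A} {s : Set ℝ} (hs : s.Countable)
    (hu : Continuous u) (hv : Continuous v) (hu' : ∀ x ∉ s, HasDerivAt u (u' x) x)
    (hv' : ∀ x ∉ s, HasDerivAt v (v' x) x) (huv' : Integrable fun x => u x * v' x)
    (hu'v : Integrable fun x => u' x * v x) (huv : Integrable fun x => u x * v x) :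
    ∫ x, u x * v' x = -∫ x, u' x * v x := by
  rw [eq_neg_iff_add_eq_zero, add_comm, ← integral_add hu'v huv']
  exact integral_eq_zero_of_hasDerivAt_off_countable_of_integrable hs (hu.mul hv)
    (fun x hx => (hu' x hx).mul (hv' x hx)) (hu'v.add huv') huv

end IntegrationByParts

section ExponentialDecay

theorem integrable_exp_neg_mul_abs {c : ℝ} (hc : 0 < c) :
    Integrable fun x : ℝ => exp (-(c * |x|)) := by
  have hneg : IntegrableOn (fun x : ℝ => exp (-(c * |x|))) (Iic 0) :=
    (integrableOn_exp_mul_Iic hc 0).congr_fun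
      (fun x hx => by simp [abs_of_nonpos (mem_Iic.1 hx)]) measurableSet_Iic
  have hpos : IntegrableOn (fun x : ℝ => exp (-(c * |x|))) (Ioi 0) :=
    (integrableOn_exp_mul_Ioi (neg_lt_zero.2 hc) 0).congr_fun
      (fun x hx => by simp [abs_of_pos (mem_Ioi.1 hx)]) measurableSet_Ioi
  simpa using hneg.union hpos

theorem pow_le_factorial_div_mul_exp {c x : ℝ} (hc : 0 < c) (hx : 0 ≤ x) (n : ℕ) :
    x ^ n ≤ n.factorial / c ^ n * exp (c * x) := by
  have h := pow_div_factorial_le_exp (c * x) (by positivity) n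
  rw [mul_pow] at h
  rw [div_mul_eq_mul_div, le_div_iff₀ (by positivity)]
  rw [div_le_iff₀ (by positivity)] at h
  linarith

theorem integrable_pow_mul_of_abs_le_exp_neg_mul_abs {φ : ℝ → ℝ} {C c : ℝ}
    (hφ : AEStronglyMeasurable φ) (hc : 0 < c) (hle : ∀ x, |φ x| ≤ C * exp (-(c * |x|)))
    (n : ℕ) : Integrable fun x => x ^ n * φ x := by
  refine ((integrable_exp_neg_mul_abs (half_pos hc)).const_mul
    (n.factorial / (c / 2) ^ n * C)).mono' (by fun_prop) (ae_of_all _ fun x => ?_)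
  calc ‖x ^ n * φ x‖ = |x| ^ n * |φ x| := by simp
    _ ≤ (n.factorial / (c / 2) ^ n * exp (c / 2 * |x|)) * (C * exp (-(c * |x|))) := by
        gcongr
        · exact pow_le_factorial_div_mul_exp (half_pos hc) (abs_nonneg x) n
        · exact hle x
    _ = n.factorial / (c / 2) ^ n * C * exp (-(c / 2 * |x|)) := by
        rw [show -(c / 2 * |x|) = c / 2 * |x| + -(c * |x|) by ring, exp_add]
        ring

end ExponentialDecay

section LaplaceTransform

theorem iteratedDeriv_integral_exp_mul {Ω : Type*} [MeasurableSpace Ω] {μ : Measure Ω}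
    {X k : Ω → ℝ} {t : ℝ} (hk : AEMeasurable k μ) (hk0 : 0 ≤ᵐ[μ] k)
    (hintegrable : ∀ᶠ z in 𝓝 t, Integrable (fun ω => exp (z * X ω) * k ω) μ) (m : ℕ) :
    iteratedDeriv m (fun z => ∫ ω, exp (z * X ω) * k ω ∂μ) t =
      ∫ ω, X ω ^ m * exp (t * X ω) * k ω ∂μ := by
  set ν : Measure Ω := μ.withDensity fun ω => ENNReal.ofReal (k ω) with hν
  have smul_eq (g : Ω → ℝ) :
      (fun ω => (ENNReal.ofReal (k ω)).toReal • g ω) =ᵐ[μ] fun ω => g ω * k ω := by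
    filter_upwards [hk0] with ω hω
    rw [ENNReal.toReal_ofReal hω, smul_eq_mul, mul_comm]
  have integral_ν (g : Ω → ℝ) : ∫ ω, g ω ∂ν = ∫ ω, g ω * k ω ∂μ := by
    rw [hν, integral_withDensity_eq_integral_toReal_smul₀ hk.ennreal_ofReal (by simp),
      integral_congr_ae (smul_eq g)]
  have ht : t ∈ interior (integrableExpSet X ν) := by
    refine mem_interior_iff_mem_nhds.2 (hintegrable.mono fun z hz => ?_)
    refine (integrable_withDensity_iff_integrable_smul₀' hk.ennreal_ofReal (by simp)).2 ?_
    exact hz.congr (smul_eq _).symm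
  have hmgf : (fun z => ∫ ω, exp (z * X ω) * k ω ∂μ) = mgf X ν :=
    funext fun z => (integral_ν _).symm
  rw [hmgf, iteratedDeriv_mgf ht, integral_ν]

end LaplaceTransform

section BetaIntegral

theorem image_exp_neg_Ioi (a : ℝ) : (fun x => exp (-x)) '' Ioi a = Ioo 0 (exp (-a)) := by
  ext t
  constructor
  · rintro ⟨x, hx, rfl⟩
    exact ⟨exp_pos _, exp_lt_exp.2 (neg_lt_neg hx)⟩
  · rintro ⟨ht0, hta⟩
    exact ⟨-log t, lt_neg.2 ((log_lt_iff_lt_exp ht0).2 hta), by simp [exp_log ht0]⟩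

theorem hasDerivAt_exp_neg (x : ℝ) : HasDerivAt (fun x => exp (-x)) (-exp (-x)) x := by
  simpa using (hasDerivAt_neg x).exp

theorem injOn_exp_neg (s : Set ℝ) : InjOn (fun x => exp (-x)) s :=
  fun _ _ _ _ h => neg_injective (exp_injective h)

variable {E : Type*} [NormedAddCommGroup E] [NormedSpace ℝ E]

theorem integral_comp_exp_neg_Ioi (g : ℝ → E) (a : ℝ) :
    ∫ x in Ioi a, exp (-x) • g (exp (-x)) = ∫ t in Ioo 0 (exp (-a)), g t := by
  rw [← image_exp_neg_Ioi]
  simpa using (integral_image_eq_integral_abs_deriv_smul measurableSet_Ioi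
    (fun x _ => (hasDerivAt_exp_neg x).hasDerivWithinAt) (injOn_exp_neg (Ioi a)) g).symm

theorem integrableOn_comp_exp_neg_Ioi (g : ℝ → E) (a : ℝ) :
    IntegrableOn (fun x => exp (-x) • g (exp (-x))) (Ioi a) ↔
      IntegrableOn g (Ioo 0 (exp (-a))) := by
  rw [← image_exp_neg_Ioi]
  simpa using (integrableOn_image_iff_integrableOn_abs_deriv_smul measurableSet_Ioi
    (fun x _ => (hasDerivAt_exp_neg x).hasDerivWithinAt) (injOn_exp_neg (Ioi a)) g).symm

variable {u v : ℝ}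

theorem ofReal_rpow_mul_one_sub_rpow {t : ℝ} (ht : t ∈ Ioo (0 : ℝ) 1) :
    ((t ^ (u - 1) * (1 - t) ^ (v - 1) : ℝ) : ℂ) =
      (t : ℂ) ^ ((u : ℂ) - 1) * (1 - (t : ℂ)) ^ ((v : ℂ) - 1) := by
  push_cast [Complex.ofReal_cpow ht.1.le, Complex.ofReal_cpow (sub_nonneg.2 ht.2.le)]
  rfl

theorem integrableOn_rpow_mul_one_sub_rpow (hu : 0 < u) (hv : 0 < v) :
    IntegrableOn (fun t : ℝ => t ^ (u - 1) * (1 - t) ^ (v - 1)) (Ioo 0 1) := by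
  have hconv := Complex.betaIntegral_convergent (u := u) (v := v) (by simpa) (by simpa)
  rw [intervalIntegrable_iff_integrableOn_Ioo_of_le zero_le_one] at hconv
  have hre : IntegrableOn (fun t : ℝ => ((t ^ (u - 1) * (1 - t) ^ (v - 1) : ℝ) : ℂ)) (Ioo 0 1) :=
    hconv.congr_fun (fun t ht => (ofReal_rpow_mul_one_sub_rpow ht).symm) measurableSet_Ioo
  exact hre.re

theorem integral_rpow_mul_one_sub_rpow (hu : 0 < u) (hv : 0 < v) :
    ∫ t in Ioo (0 : ℝ) 1, t ^ (u - 1) * (1 - t) ^ (v - 1) = beta u v := by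
  rw [beta_eq_betaIntegralReal u v hu hv, Complex.betaIntegral,
    intervalIntegral.integral_of_le zero_le_one, integral_Ioc_eq_integral_Ioo,
    ← setIntegral_congr_fun measurableSet_Ioo fun t ht => ofReal_rpow_mul_one_sub_rpow ht,
    integral_complex_ofReal, Complex.ofReal_re]

theorem exp_neg_smul_rpow_mul_one_sub_rpow (x : ℝ) :
    exp (-x) • (exp (-x) ^ (u - 1) * (1 - exp (-x)) ^ (v - 1)) =
      exp (-(u * x)) * (1 - exp (-x)) ^ (v - 1) := by
  rw [smul_eq_mul, ← mul_assoc, ← exp_mul, ← exp_add]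
  ring_nf

theorem integrableOn_exp_neg_mul_one_sub_exp_rpow (hu : 0 < u) (hv : 0 < v) :
    IntegrableOn (fun x => exp (-(u * x)) * (1 - exp (-x)) ^ (v - 1)) (Ioi 0) := by
  simpa only [exp_neg_smul_rpow_mul_one_sub_rpow, neg_zero, exp_zero,
    integrableOn_rpow_mul_one_sub_rpow hu hv, iff_true] using
    integrableOn_comp_exp_neg_Ioi (fun t => t ^ (u - 1) * (1 - t) ^ (v - 1)) 0

theorem integral_exp_neg_mul_one_sub_exp_rpow (hu : 0 < u) (hv : 0 < v) :
    ∫ x in Ioi 0, exp (-(u * x)) * (1 - exp (-x)) ^ (v - 1) = beta u v := by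
  simpa only [exp_neg_smul_rpow_mul_one_sub_rpow, neg_zero, exp_zero,
    integral_rpow_mul_one_sub_rpow hu hv] using
    integral_comp_exp_neg_Ioi (fun t => t ^ (u - 1) * (1 - t) ^ (v - 1)) 0

end BetaIntegral

section BetaKernel

/-- The function `r(x) = √(1 - e^{-2x})`, in terms of which both the beta integral (after the
substitution `t = e^{-2x}`) and the density `etaLog` are rational or logarithmic. It vanishes for
`x ≤ 0`, since `√` is `0` on negative numbers. -/
noncomputable def sqrtOneSubExp (x : ℝ) : ℝ := √(1 - exp (-(2 * x)))

/-- The kernel `K = 1/r - 1` on `(0, ∞)`, whose Laplace transform is the pole-free part of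
the beta function: `f z = 2 ∫₀^∞ e^{-2zx} K(x) dx`. The summand `-1` removes the pole `1/z`. -/
noncomputable def betaKernel (x : ℝ) : ℝ := 1 / sqrtOneSubExp x - 1

theorem sqrtOneSubExp_of_nonpos {x : ℝ} (hx : x ≤ 0) : sqrtOneSubExp x = 0 :=
  sqrt_eq_zero_of_nonpos (by linarith [one_le_exp (show 0 ≤ -(2 * x) by linarith)])

theorem sqrtOneSubExp_nonneg (x : ℝ) : 0 ≤ sqrtOneSubExp x := sqrt_nonneg _

theorem sqrtOneSubExp_pos {x : ℝ} (hx : 0 < x) : 0 < sqrtOneSubExp x :=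
  sqrt_pos.2 (sub_pos.2 (exp_lt_one_iff.2 (by linarith)))

theorem sqrtOneSubExp_le_one (x : ℝ) : sqrtOneSubExp x ≤ 1 :=
  sqrt_le_one.2 (sub_le_self 1 (exp_nonneg _))

theorem exp_neg_two_mul_eq {x : ℝ} (hx : 0 ≤ x) :
    exp (-(2 * x)) = 1 - sqrtOneSubExp x ^ 2 := by
  rw [sqrtOneSubExp, sq_sqrt (sub_nonneg.2 (exp_le_one_iff.2 (by linarith))), sub_sub_cancel]

theorem one_sub_sqrtOneSubExp_le {x : ℝ} (hx : 0 ≤ x) :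
    1 - sqrtOneSubExp x ≤ exp (-(2 * x)) := by
  rw [exp_neg_two_mul_eq hx]
  nlinarith [sqrtOneSubExp_nonneg x, sqrtOneSubExp_le_one x]

@[fun_prop]
theorem continuous_sqrtOneSubExp : Continuous sqrtOneSubExp := by
  unfold sqrtOneSubExp
  fun_prop

theorem hasDerivAt_exp_mul (c x : ℝ) : HasDerivAt (fun x => exp (c * x)) (c * exp (c * x)) x := by
  simpa [mul_comm] using ((hasDerivAt_id x).const_mul c).exp

theorem hasDerivAt_sqrtOneSubExp {x : ℝ} (hx : 0 < x) :
    HasDerivAt sqrtOneSubExp (1 / sqrtOneSubExp x - sqrtOneSubExp x) x := by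
  have hr := (sqrtOneSubExp_pos hx).ne'
  have hexp : HasDerivAt (fun x => 1 - exp (-(2 * x))) (2 * exp (-(2 * x))) x := by
    simpa using (hasDerivAt_exp_mul (-2) x).const_sub 1
  refine (hexp.sqrt (sqrt_ne_zero'.1 hr |>.ne')).congr_deriv ?_
  rw [← sqrtOneSubExp, exp_neg_two_mul_eq hx.le]
  field_simp

@[fun_prop]
theorem measurable_betaKernel : Measurable betaKernel := by
  unfold betaKernel
  fun_prop

theorem betaKernel_nonneg {x : ℝ} (hx : 0 < x) : 0 ≤ betaKernel x :=
  sub_nonneg.2 ((one_le_div (sqrtOneSubExp_pos hx)).2 (sqrtOneSubExp_le_one x))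

theorem betaKernel_le {x : ℝ} (hx : 0 < x) :
    betaKernel x ≤ exp (-(2 * x)) / sqrtOneSubExp x := by
  have hr := sqrtOneSubExp_pos hx
  rw [le_div_iff₀ hr, betaKernel, sub_mul, one_div_mul_cancel hr.ne', one_mul]
  exact one_sub_sqrtOneSubExp_le hx.le

theorem one_sub_exp_rpow_eq_inv_sqrtOneSubExp {x : ℝ} (hx : 0 < x) :
    (1 - exp (-(2 * x))) ^ ((1 : ℝ) / 2 - 1) = (sqrtOneSubExp x)⁻¹ := by
  have hbase : 0 ≤ 1 - exp (-(2 * x)) := sub_nonneg.2 (exp_le_one_iff.2 (by linarith))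
  rw [sqrtOneSubExp, sqrt_eq_rpow, ← rpow_neg hbase]
  norm_num

theorem integrableOn_exp_div_sqrtOneSubExp {u : ℝ} (hu : 0 < u) :
    IntegrableOn (fun x => exp (-(2 * u * x)) / sqrtOneSubExp x) (Ioi 0) := by
  have hbeta : IntegrableOn (fun x => exp (-(u * x)) * (1 - exp (-x)) ^ ((1 : ℝ) / 2 - 1))
      (Ioi (2 * 0)) := by
    simpa only [mul_zero] using integrableOn_exp_neg_mul_one_sub_exp_rpow hu one_half_pos
  refine ((integrableOn_Ioi_comp_mul_left_iff _ 0 two_pos).2 hbeta).congr_fun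
    (fun x hx => ?_) measurableSet_Ioi
  simp only [one_sub_exp_rpow_eq_inv_sqrtOneSubExp hx]
  rw [div_eq_mul_inv, show u * (2 * x) = 2 * u * x by ring]

theorem two_mul_integral_exp_div_sqrtOneSubExp {u : ℝ} (hu : 0 < u) :
    2 * ∫ x in Ioi 0, exp (-(2 * u * x)) / sqrtOneSubExp x = betaHalf u := by
  have hscale := integral_comp_mul_left_Ioi'
    (fun x => exp (-(u * x)) * (1 - exp (-x)) ^ ((1 : ℝ) / 2 - 1)) 0 two_pos
  rw [mul_zero, integral_exp_neg_mul_one_sub_exp_rpow hu one_half_pos, smul_eq_mul] at hscale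
  rw [betaHalf, ← beta, ← hscale]
  congr 1
  refine setIntegral_congr_fun measurableSet_Ioi fun x hx => ?_
  simp only [one_sub_exp_rpow_eq_inv_sqrtOneSubExp hx]
  rw [div_eq_mul_inv, show u * (2 * x) = 2 * u * x by ring]

variable {z : ℝ}

theorem integrableOn_exp_mul_betaKernel (hz : -1 < z) :
    IntegrableOn (fun x => exp (-(2 * z * x)) * betaKernel x) (Ioi 0) := by
  refine (integrableOn_exp_div_sqrtOneSubExp (u := z + 1) (by linarith)).mono' (by fun_prop) ?_
  filter_upwards [ae_restrict_mem measurableSet_Ioi] with x hx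
  rw [norm_of_nonneg (mul_nonneg (exp_nonneg _) (betaKernel_nonneg hx))]
  calc exp (-(2 * z * x)) * betaKernel x
      ≤ exp (-(2 * z * x)) * (exp (-(2 * x)) / sqrtOneSubExp x) := by
        gcongr
        exact betaKernel_le hx
    _ = exp (-(2 * (z + 1) * x)) / sqrtOneSubExp x := by
        rw [← mul_div_assoc, ← exp_add]
        ring_nf

theorem integrableOn_pow_mul_betaKernel (m : ℕ) :
    IntegrableOn (fun x => x ^ m * betaKernel x) (Ioi 0) := by
  refine ((integrableOn_exp_mul_betaKernel (z := -(1 / 2)) (by norm_num)).const_mul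
    (m.factorial : ℝ)).mono' (by fun_prop) ?_
  filter_upwards [ae_restrict_mem measurableSet_Ioi] with x hx
  have hx : 0 < x := hx
  have hK := betaKernel_nonneg hx
  have hpow := pow_le_factorial_div_mul_exp one_pos hx.le m
  rw [norm_of_nonneg (by positivity), ← mul_assoc]
  gcongr
  simpa using hpow

theorem tendsto_exp_mul_sqrtOneSubExp_sub_one (hz : -1 < z) :
    Tendsto (fun x => exp (-(2 * z * x)) * (sqrtOneSubExp x - 1)) atTop (𝓝 0) := by
  have hexp : Tendsto (fun x => exp (-(2 * (z + 1) * x))) atTop (𝓝 0) :=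
    tendsto_exp_neg_atTop_nhds_zero.comp (tendsto_id.const_mul_atTop (by linarith))
  refine squeeze_zero_norm' ?_ hexp
  filter_upwards [eventually_ge_atTop 0] with x hx
  rw [norm_mul, norm_of_nonneg (exp_nonneg _), norm_eq_abs, abs_sub_comm,
    abs_of_nonneg (sub_nonneg.2 (sqrtOneSubExp_le_one x)),
    show -(2 * (z + 1) * x) = -(2 * z * x) + -(2 * x) by ring, exp_add]
  gcongr
  exact one_sub_sqrtOneSubExp_le hx

-- Integrate the derivative of `e^{-2zx} (r(x) - 1)`, which decays for `z > -1`.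
theorem integral_exp_mul_betaKernel_recurrence (hz : -1 < z) :
    (2 * z + 1) * ∫ x in Ioi 0, exp (-(2 * (z + 1) * x)) / sqrtOneSubExp x =
      1 + 2 * z * ∫ x in Ioi 0, exp (-(2 * z * x)) * betaKernel x := by
  have hleft := (integrableOn_exp_div_sqrtOneSubExp (u := z + 1) (by linarith)).const_mul
    (2 * z + 1)
  have hright := (integrableOn_exp_mul_betaKernel hz).const_mul (2 * z)
  have hderiv : ∀ x ∈ Ioi 0, HasDerivAt (fun x => exp (-(2 * z * x)) * (sqrtOneSubExp x - 1))
      ((2 * z + 1) * (exp (-(2 * (z + 1) * x)) / sqrtOneSubExp x)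
        - 2 * z * (exp (-(2 * z * x)) * betaKernel x)) x := by
    intro x hx
    have hr := (sqrtOneSubExp_pos hx).ne'
    have hexp : HasDerivAt (fun x => exp (-(2 * z * x))) (-(2 * z) * exp (-(2 * z * x))) x := by
      simpa using hasDerivAt_exp_mul (-(2 * z)) x
    refine (hexp.mul ((hasDerivAt_sqrtOneSubExp hx).sub_const 1)).congr_deriv ?_
    rw [show -(2 * (z + 1) * x) = -(2 * z * x) + -(2 * x) by ring, exp_add,
      exp_neg_two_mul_eq (mem_Ioi.1 hx).le, betaKernel]
    field_simp
    ring
  have hFTC := integral_Ioi_of_hasDerivAt_of_tendsto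
    (by fun_prop : Continuous _).continuousWithinAt hderiv (hleft.sub hright)
    (tendsto_exp_mul_sqrtOneSubExp_sub_one hz)
  rw [integral_sub hleft hright, integral_const_mul, integral_const_mul,
    sqrtOneSubExp_of_nonpos le_rfl] at hFTC
  simp only [mul_zero, neg_zero, exp_zero] at hFTC
  linarith

theorem mul_betaHalf (hz : z ≠ 0) : z * betaHalf z = (z + 1 / 2) * betaHalf (z + 1) := by
  rw [betaHalf, betaHalf, Gamma_add_one hz, show z + 1 + 1 / 2 = z + 1 / 2 + 1 by ring]
  by_cases hz' : z + 1 / 2 = 0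
  -- Here the junk value `1 / Γ(0) = 1 / 0 = 0` is the true value of the entire function `1 / Γ`.
  · rw [hz', Gamma_zero, div_zero, mul_zero, zero_mul]
  · rw [Gamma_add_one hz', ← mul_div_assoc, ← mul_div_assoc, mul_div_mul_left _ _ hz', mul_assoc]

end BetaKernel


section Tent

/-- The continuous weight `w` with `w' = 1` on `(-log 2, 0)`, `w' = -K` on `(0, ∞)` and `w = 0` to
the left of `-log 2`. It links the kernel `K` of the beta function with the density: shifted by
`log 2`, the latter satisfies `η' = 2 η - (48 / π²) w`. -/
noncomputable def tent (x : ℝ) : ℝ := max (min x 0 + log 2) 0 - log (1 + sqrtOneSubExp x)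

theorem one_add_sqrtOneSubExp_pos (x : ℝ) : 0 < 1 + sqrtOneSubExp x :=
  add_pos_of_pos_of_nonneg one_pos (sqrtOneSubExp_nonneg x)

@[fun_prop]
theorem continuous_tent : Continuous tent := by
  unfold tent
  fun_prop (disch := exact fun x => (one_add_sqrtOneSubExp_pos x).ne')

theorem tent_of_nonpos {x : ℝ} (hx : x ≤ 0) : tent x = max (x + log 2) 0 := by
  simp [tent, sqrtOneSubExp_of_nonpos hx, hx]

theorem tent_of_nonneg {x : ℝ} (hx : 0 ≤ x) : tent x = log 2 - log (1 + sqrtOneSubExp x) := by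
  simp [tent, hx, log_nonneg one_le_two]

theorem tent_of_le_neg_log_two {x : ℝ} (hx : x ≤ -log 2) : tent x = 0 := by
  rw [tent_of_nonpos (by linarith [log_pos one_lt_two]), max_eq_right (by linarith)]

theorem tent_of_mem_Icc {x : ℝ} (hx : x ∈ Icc (-log 2) 0) : tent x = x + log 2 := by
  rw [tent_of_nonpos hx.2, max_eq_left (by linarith [hx.1])]

theorem tent_nonneg (x : ℝ) : 0 ≤ tent x := by
  rcases le_total x 0 with hx | hx
  · rw [tent_of_nonpos hx]
    exact le_max_right _ _
  · rw [tent_of_nonneg hx, sub_nonneg]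
    exact log_le_log (one_add_sqrtOneSubExp_pos x) (by linarith [sqrtOneSubExp_le_one x])

theorem exp_two_mul_add_log_two (x : ℝ) : exp (2 * (x + log 2)) = 4 * exp (2 * x) := by
  rw [mul_add, exp_add, two_mul (log 2), exp_add, exp_log two_pos]
  ring

theorem one_sub_div_one_add_sqrtOneSubExp_le {x : ℝ} (hx : 0 ≤ x) :
    (1 - sqrtOneSubExp x) / (1 + sqrtOneSubExp x) ≤ exp (-(2 * x)) :=
  (div_le_self (sub_nonneg.2 (sqrtOneSubExp_le_one x))
    (by linarith [sqrtOneSubExp_nonneg x])).trans (one_sub_sqrtOneSubExp_le hx)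

theorem tent_le (x : ℝ) : tent x ≤ 2 * exp (-(2 * |x|)) := by
  have hexp := exp_pos (-(2 * |x|))
  rcases le_total x 0 with hx | hx
  · rw [abs_of_nonpos hx, mul_neg, neg_neg] at hexp ⊢
    rw [tent_of_nonpos hx]
    refine max_le ?_ (by linarith)
    linarith [add_one_le_exp (2 * (x + log 2)), exp_two_mul_add_log_two x]
  · have hr := one_add_sqrtOneSubExp_pos x
    rw [abs_of_nonneg hx] at hexp ⊢
    calc tent x = log (2 / (1 + sqrtOneSubExp x)) := by
          rw [tent_of_nonneg hx, log_div two_ne_zero hr.ne']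
      _ ≤ 2 / (1 + sqrtOneSubExp x) - 1 := log_le_sub_one_of_pos (by positivity)
      _ = (1 - sqrtOneSubExp x) / (1 + sqrtOneSubExp x) := by
          field_simp
          ring
      _ ≤ exp (-(2 * x)) := one_sub_div_one_add_sqrtOneSubExp_le hx
      _ ≤ 2 * exp (-(2 * x)) := by linarith

theorem hasDerivAt_tent_of_lt {x : ℝ} (hx : x < -log 2) : HasDerivAt tent 0 x :=
  (hasDerivAt_const x 0).congr_of_eventuallyEq <|
    (eventually_lt_nhds hx).mono fun _ hy => tent_of_le_neg_log_two hy.le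

theorem hasDerivAt_tent_of_mem_Ioo {x : ℝ} (hx : x ∈ Ioo (-log 2) 0) : HasDerivAt tent 1 x :=
  ((hasDerivAt_id x).add_const (log 2)).congr_of_eventuallyEq <|
    (isOpen_Ioo.mem_nhds hx |> eventually_mem_set.2).mono fun _ hy =>
      tent_of_mem_Icc (Ioo_subset_Icc_self hy)

theorem hasDerivAt_tent_of_pos {x : ℝ} (hx : 0 < x) : HasDerivAt tent (-betaKernel x) x := by
  have hr := sqrtOneSubExp_pos hx
  have hlog := ((hasDerivAt_sqrtOneSubExp hx).const_add 1).log (by positivity)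
  refine ((hlog.const_sub (log 2)).congr_of_eventuallyEq
    ((eventually_gt_nhds hx).mono fun y hy => tent_of_nonneg hy.le)).congr_deriv ?_
  rw [betaKernel]
  field_simp
  ring

theorem lt_or_mem_Ioo_or_lt_of_notMem_pair {α : Type*} [LinearOrder α] {a b x : α}
    (hx : x ∉ ({a, b} : Set α)) : x < a ∨ x ∈ Ioo a b ∨ b < x := by
  simp only [mem_insert_iff, mem_singleton_iff, not_or] at hx
  exact (lt_or_gt_of_ne hx.1).imp_right fun ha =>
    (lt_or_gt_of_ne hx.2).imp_left fun hb => ⟨ha, hb⟩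

theorem hasDerivAt_tent {x : ℝ} (hx : x ∉ ({-log 2, 0} : Set ℝ)) :
    HasDerivAt tent ((Ioc (-log 2) 0).indicator 1 x - (Ioi 0).indicator betaKernel x) x := by
  rcases lt_or_mem_Ioo_or_lt_of_notMem_pair hx with h | h | h
  · have hneg : x ≤ 0 := by linarith [log_pos one_lt_two]
    simpa [h.le, hneg] using hasDerivAt_tent_of_lt h
  · simpa [h.1, h.2.le] using hasDerivAt_tent_of_mem_Ioo h
  · simpa [h] using hasDerivAt_tent_of_pos h

theorem integrable_pow_mul_tent (n : ℕ) : Integrable fun x => x ^ n * tent x :=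
  integrable_pow_mul_of_abs_le_exp_neg_mul_abs (by fun_prop) two_pos
    (fun x => (abs_of_nonneg (tent_nonneg x)).trans_le (tent_le x)) n

theorem integral_pow_mul_betaKernel (m : ℕ) :
    ∫ x in Ioi 0, x ^ m * betaKernel x =
      m * (∫ x, x ^ (m - 1) * tent x) - (-log 2) ^ (m + 1) / (m + 1) := by
  have hIoc : Integrable ((Ioc (-log 2) 0).indicator fun x => x ^ m) :=
    (intervalIntegral.intervalIntegrable_pow m).1.integrable_indicator measurableSet_Ioc
  have hIoi : Integrable ((Ioi 0).indicator fun x => x ^ m * betaKernel x) :=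
    (integrableOn_pow_mul_betaKernel m).integrable_indicator measurableSet_Ioi
  have htent := integrable_pow_mul_tent
  have hw' (x : ℝ) : x ^ m * ((Ioc (-log 2) 0).indicator 1 x - (Ioi 0).indicator betaKernel x) =
      (Ioc (-log 2) 0).indicator (fun x => x ^ m) x
        - (Ioi 0).indicator (fun x => x ^ m * betaKernel x) x := by
    simp [indicator_apply, mul_sub]
  have hparts := integral_mul_deriv_eq_neg_of_integrable_off_countable
    (Set.toFinite {-log 2, 0}).countable (continuous_pow m) continuous_tent
    (fun x _ => hasDerivAt_pow m x) (fun x hx => hasDerivAt_tent hx)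
    ((hIoc.sub hIoi).congr (ae_of_all _ fun x => (hw' x).symm))
    (by simpa only [mul_assoc] using (htent (m - 1)).const_mul (m : ℝ)) (htent m)
  simp only [hw', mul_assoc, integral_const_mul, integral_sub hIoc hIoi,
    integral_indicator measurableSet_Ioc, integral_indicator measurableSet_Ioi,
    ← intervalIntegral.integral_of_le (neg_nonpos.2 (log_nonneg one_le_two)),
    integral_pow] at hparts
  rw [zero_pow m.succ_ne_zero] at hparts
  linear_combination -hparts

end Tent

section LaurentCoefficients

theorem integral_betaKernel : ∫ x in Ioi 0, betaKernel x = log 2 := by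
  simpa using integral_pow_mul_betaKernel 0

theorem f_eq_integral {z : ℝ} (hz : -1 < z) :
    f z = 2 * ∫ x in Ioi 0, exp (-(2 * z * x)) * betaKernel x := by
  rcases eq_or_ne z 0 with rfl | hz0
  · simp [f, integral_betaKernel]
  · rw [f, if_neg hz0, ← mul_right_inj' hz0, mul_sub, mul_one_div_cancel hz0, mul_betaHalf hz0,
      ← two_mul_integral_exp_div_sqrtOneSubExp (by linarith : 0 < z + 1)]
    linear_combination integral_exp_mul_betaKernel_recurrence hz

theorem b_eq_integral (m : ℕ) :
    b m = 2 * (-2) ^ m / m.factorial * ∫ x in Ioi 0, x ^ m * betaKernel x := by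
  have hnear : ∀ᶠ z : ℝ in 𝓝 0, -1 < z := eventually_gt_nhds neg_one_lt_zero
  have hform (z x : ℝ) :
      exp (z * (-2 * x)) * betaKernel x = exp (-(2 * z * x)) * betaKernel x := by
    ring_nf
  have hf : f =ᶠ[𝓝 0] fun z => 2 * ∫ x in Ioi 0, exp (z * (-2 * x)) * betaKernel x :=
    hnear.mono fun z hz => by simp only [hform, f_eq_integral hz]
  have hderiv := iteratedDeriv_integral_exp_mul (X := fun x => -2 * x)
    measurable_betaKernel.aemeasurable
    ((ae_restrict_mem measurableSet_Ioi).mono fun x hx => betaKernel_nonneg hx)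
    (hnear.mono fun z hz => by
      simpa only [hform] using (integrableOn_exp_mul_betaKernel hz).integrable) m
  rw [b, hf.iteratedDeriv_eq, iteratedDeriv_const_mul_field, hderiv]
  simp only [zero_mul, exp_zero, mul_one, mul_pow, mul_assoc, integral_const_mul]
  ring

end LaurentCoefficients

section ShiftedDensity

theorem etaLog_add_log_two_of_le {x : ℝ} (hx : x ≤ -log 2) :
    etaLog (x + log 2) = 6 / π ^ 2 * (4 * exp (2 * x)) := by
  rw [etaLog, if_pos (by linarith), exp_two_mul_add_log_two]

theorem etaLog_add_log_two_of_mem_Ioc {x : ℝ} (hx : x ∈ Ioc (-log 2) 0) :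
    etaLog (x + log 2) = 6 / π ^ 2 * (-(4 * exp (2 * x)) + 2 + 4 * (x + log 2)) := by
  rw [etaLog, if_neg (by linarith [hx.1]), if_pos (by linarith [hx.2]), exp_two_mul_add_log_two]

theorem sqrt_quarter_sub_exp (x : ℝ) :
    √(1 / 4 - exp (-2 * (x + log 2))) = sqrtOneSubExp x / 2 := by
  have hexp : exp (-2 * (x + log 2)) = exp (-(2 * x)) / 4 := by
    rw [neg_mul, exp_neg, exp_two_mul_add_log_two, exp_neg, mul_inv, div_eq_inv_mul]
  rw [hexp, ← sub_div, sqrt_div' _ (by norm_num), sqrtOneSubExp]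
  norm_num [show (4 : ℝ) = 2 ^ 2 by norm_num]

theorem etaLog_add_log_two_of_pos {x : ℝ} (hx : 0 < x) :
    etaLog (x + log 2) = 6 / π ^ 2 * (2 - 4 / (1 + sqrtOneSubExp x) + 4 * tent x) := by
  have hr := one_add_sqrtOneSubExp_pos x
  have hexp : exp (2 * x) * (1 - sqrtOneSubExp x ^ 2) = 1 := by
    rw [← exp_neg_two_mul_eq hx.le, ← exp_add, add_neg_cancel, exp_zero]
  have hlog : log (1 / 2 + sqrtOneSubExp x / 2) = -tent x := by
    rw [tent_of_nonneg hx.le, ← add_div, log_div hr.ne' two_ne_zero, neg_sub]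
  have hdiv : 4 / (1 + sqrtOneSubExp x) = 4 * exp (2 * x) * (1 - sqrtOneSubExp x) := by
    rw [div_eq_iff hr.ne']
    linear_combination -4 * hexp
  rw [etaLog, if_neg (by linarith [log_pos one_lt_two]), if_neg (by linarith),
    sqrt_quarter_sub_exp, hlog, exp_two_mul_add_log_two, hdiv]
  ring

theorem continuous_etaLog : Continuous etaLog := by
  have hexp : exp (2 * log 2) = 4 := by simpa using exp_two_mul_add_log_two 0
  unfold etaLog
  refine Continuous.if_le (by fun_prop) (Continuous.if_le (by fun_prop) ?_ continuous_id
    continuous_const ?_) continuous_id continuous_const ?_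
  · have hpos (s : ℝ) : 1 / 2 + √(1 / 4 - exp (-2 * s)) ≠ 0 := by positivity
    fun_prop (disch := exact hpos)
  · rintro s rfl
    have hlog : log (1 / 2) = -log 2 := by rw [one_div, log_inv]
    rw [neg_mul, exp_neg, hexp, ← one_div, sub_self, sqrt_zero, add_zero, hlog]
    ring
  · rintro s rfl
    norm_num [log_nonneg]

theorem abs_etaLog_add_log_two_le (x : ℝ) :
    |etaLog (x + log 2)| ≤ 48 / π ^ 2 * exp (-(2 * |x|)) := by
  suffices ∃ E, etaLog (x + log 2) = 6 / π ^ 2 * E ∧ |E| ≤ 8 * exp (-(2 * |x|)) by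
    obtain ⟨E, hE, hle⟩ := this
    rw [hE, abs_mul, abs_of_pos (by positivity)]
    calc 6 / π ^ 2 * |E| ≤ 6 / π ^ 2 * (8 * exp (-(2 * |x|))) := by gcongr
      _ = 48 / π ^ 2 * exp (-(2 * |x|)) := by ring
  have hexp := exp_pos (2 * x)
  rcases le_or_gt x (-log 2) with hx | hx
  · refine ⟨_, etaLog_add_log_two_of_le hx, ?_⟩
    rw [abs_of_nonpos (by linarith [log_pos one_lt_two] : x ≤ 0), mul_neg, neg_neg, abs_le]
    constructor <;> linarith
  rcases le_or_gt x 0 with hx0 | hx0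
  · refine ⟨_, etaLog_add_log_two_of_mem_Ioc ⟨hx, hx0⟩, ?_⟩
    have hlin := add_one_le_exp (2 * (x + log 2))
    rw [exp_two_mul_add_log_two] at hlin
    rw [abs_of_nonpos hx0, mul_neg, neg_neg, abs_le]
    constructor <;> linarith
  · refine ⟨_, etaLog_add_log_two_of_pos hx0, ?_⟩
    have hr := one_add_sqrtOneSubExp_pos x
    have hfrac : 2 - 4 / (1 + sqrtOneSubExp x) =
        -(2 * ((1 - sqrtOneSubExp x) / (1 + sqrtOneSubExp x))) := by
      field_simp
      ring
    have hfrac_nonneg := div_nonneg (sub_nonneg.2 (sqrtOneSubExp_le_one x)) hr.le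
    have hfrac_le := one_sub_div_one_add_sqrtOneSubExp_le hx0.le
    have htent := tent_le x
    rw [abs_of_pos hx0] at htent ⊢
    rw [hfrac, abs_le]
    constructor <;> linarith [tent_nonneg x]

theorem hasDerivAt_etaLog_add_log_two {x : ℝ} (hx : x ∉ ({-log 2, 0} : Set ℝ)) :
    HasDerivAt (fun x => etaLog (x + log 2))
      (2 * etaLog (x + log 2) - 48 / π ^ 2 * tent x) x := by
  have hexp := (hasDerivAt_exp_mul 2 x).const_mul 4
  rcases lt_or_mem_Ioo_or_lt_of_notMem_pair hx with h | h | h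
  · refine ((hexp.const_mul (6 / π ^ 2)).congr_of_eventuallyEq ((eventually_lt_nhds h).mono
      fun y hy => etaLog_add_log_two_of_le hy.le)).congr_deriv ?_
    rw [etaLog_add_log_two_of_le h.le, tent_of_le_neg_log_two h.le]
    ring
  · have hmid := (hexp.neg.add_const 2).add (((hasDerivAt_id x).add_const (log 2)).const_mul 4)
    refine ((hmid.const_mul (6 / π ^ 2)).congr_of_eventuallyEq ((isOpen_Ioo.eventually_mem h).mono
      fun y hy => etaLog_add_log_two_of_mem_Ioc (Ioo_subset_Ioc_self hy))).congr_deriv ?_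
    rw [etaLog_add_log_two_of_mem_Ioc (Ioo_subset_Ioc_self h),
      tent_of_mem_Icc (Ioo_subset_Icc_self h)]
    ring
  · have hr := sqrtOneSubExp_pos h
    have hright := (((hasDerivAt_const x (4 : ℝ)).div ((hasDerivAt_sqrtOneSubExp h).const_add 1)
      (by positivity)).const_sub 2).add ((hasDerivAt_tent_of_pos h).const_mul 4)
    refine ((hright.const_mul (6 / π ^ 2)).congr_of_eventuallyEq ((eventually_gt_nhds h).mono
      fun y hy => etaLog_add_log_two_of_pos hy)).congr_deriv ?_
    rw [etaLog_add_log_two_of_pos h, betaKernel]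
    field_simp
    ring

theorem integrable_pow_mul_etaLog_add_log_two (n : ℕ) :
    Integrable fun x => x ^ n * etaLog (x + log 2) :=
  integrable_pow_mul_of_abs_le_exp_neg_mul_abs
    (continuous_etaLog.comp (continuous_add_const _)).aestronglyMeasurable two_pos
    abs_etaLog_add_log_two_le n

theorem integral_moment_etaLog_add_log_two (n : ℕ) :
    ∫ x, (2 * x ^ n + n * x ^ (n - 1)) * etaLog (x + log 2) =
      48 / π ^ 2 * ∫ x, x ^ n * tent x := by
  have hη := integrable_pow_mul_etaLog_add_log_two
  have hw := integrable_pow_mul_tent n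
  have hη' : Integrable fun x => n * x ^ (n - 1) * etaLog (x + log 2) := by
    simpa only [mul_assoc] using (hη (n - 1)).const_mul (n : ℝ)
  have hsplit (x : ℝ) : x ^ n * (2 * etaLog (x + log 2) - 48 / π ^ 2 * tent x) =
      2 * (x ^ n * etaLog (x + log 2)) - 48 / π ^ 2 * (x ^ n * tent x) := by ring
  have hsum (x : ℝ) : (2 * x ^ n + n * x ^ (n - 1)) * etaLog (x + log 2) =
      2 * (x ^ n * etaLog (x + log 2)) + n * x ^ (n - 1) * etaLog (x + log 2) := by ring
  have hparts := integral_mul_deriv_eq_neg_of_integrable_off_countable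
    (Set.toFinite {-log 2, 0}).countable (continuous_pow n)
    (continuous_etaLog.comp (continuous_add_const _)) (fun x _ => hasDerivAt_pow n x)
    (fun x hx => hasDerivAt_etaLog_add_log_two hx)
    ((((hη n).const_mul 2).sub (hw.const_mul _)).congr (ae_of_all _ fun x => (hsplit x).symm))
    hη' (hη n)
  simp only [hsplit, Function.comp_apply] at hparts
  rw [integral_sub ((hη n).const_mul 2) (hw.const_mul _), integral_const_mul,
    integral_const_mul] at hparts
  simp only [hsum]
  rw [integral_add ((hη n).const_mul 2) hη', integral_const_mul]
  linear_combination hparts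

end ShiftedDensity

theorem rho_formula (n : ℕ) (hn : 1 ≤ n) :
    (∫ s : ℝ, (2 * (s - Real.log 2) ^ n + (n : ℝ) * (s - Real.log 2) ^ (n - 1)) * etaLog s) =
      24 / Real.pi ^ 2 *
        ((n.factorial : ℝ) * (-1) ^ (n + 1) * b (n + 1) / 2 ^ (n + 1)
          + 2 * (-Real.log 2) ^ (n + 2) / (((n : ℝ) + 2) * ((n : ℝ) + 1))) := by
  have hsign : (-1 : ℝ) ^ (n + 1) * (-2) ^ (n + 1) = 2 ^ (n + 1) := by rw [← mul_pow]; norm_num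
  have hcoeff : (n.factorial : ℝ) * (-1) ^ (n + 1) * b (n + 1) / 2 ^ (n + 1) =
      2 / (n + 1) * ∫ x in Ioi 0, x ^ (n + 1) * betaKernel x := by
    rw [b_eq_integral, Nat.factorial_succ, Nat.cast_mul, Nat.cast_succ, ← hsign]
    field_simp
  rw [← integral_add_right_eq_self _ (log 2)]
  simp only [add_sub_cancel_right]
  rw [integral_moment_etaLog_add_log_two, hcoeff, integral_pow_mul_betaKernel, Nat.add_sub_cancel]
  push_cast
  field_simp
  ring
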